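/- Let E be a real Banach space, let L : E → E be a continuous linear equivalence, and let X : ℝ → E → E be a time-dependent vector field such that X(t, L x) = L(X(t, x)) for all t and x, the map t ↦ X(t, y) is continuous for each y, and for each t the map y ↦ X(t, y) is Lipschitz with a constant K independent of t. If u, w : ℝ → E are integral curves of X (each has derivative X(t, ·) evaluated at its current position at every time t) with w(0) = L(u(0)), then w(t) = L(u(t)) for all t ∈ ℝ. -/

import Mathlib

section IntegralCurve

variable {E F : Type*} [NormedAddCommGroup E] [NormedSpace ℝ E]
  [NormedAddCommGroup F] [NormedSpace ℝ F]

lemma isIntegralCurve_comp_of_hasFDerivAt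
    {φ : E → F} {φ' : E → E →L[ℝ] F} {X : ℝ → E → E} {Y : ℝ → F → F} {u : ℝ → E}
    (hφ : ∀ x, HasFDerivAt φ (φ' x) x) (hXY : ∀ t x, Y t (φ x) = φ' x (X t x))
    (hu : IsIntegralCurve u X) :
    IsIntegralCurve (φ ∘ u) Y := by
  intro t
  rw [Function.comp_apply, hXY]
  exact (hφ (u t)).comp_hasDerivAt t (hu t)

lemma eq_of_isIntegralCurve_of_lipschitzWith
    {X : ℝ → E → E} {K : NNReal} {u w : ℝ → E} {t₀ : ℝ}
    (hX : ∀ t, LipschitzWith K (X t)) (hu : IsIntegralCurve u X) (hw : IsIntegralCurve w X)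
    (h₀ : u t₀ = w t₀) :
    u = w :=
  ODE_solution_unique_univ (fun t ↦ (hX t).lipschitzOnWith (s := Set.univ))
    (fun t ↦ ⟨hu t, Set.mem_univ _⟩) (fun t ↦ ⟨hw t, Set.mem_univ _⟩) h₀

theorem equivariant_field_equivariant_flow_general
    {φ : E → F} {φ' : E → E →L[ℝ] F} {X : ℝ → E → E} {Y : ℝ → F → F} {K : NNReal}
    {u : ℝ → E} {w : ℝ → F} {t₀ : ℝ}
    (hφ : ∀ x, HasFDerivAt φ (φ' x) x) (hXY : ∀ t x, Y t (φ x) = φ' x (X t x))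
    (hY : ∀ t, LipschitzWith K (Y t))
    (hu : IsIntegralCurve u X) (hw : IsIntegralCurve w Y) (h₀ : w t₀ = φ (u t₀)) :
    w = φ ∘ u :=
  have hφu : IsIntegralCurve (φ ∘ u) Y := isIntegralCurve_comp_of_hasFDerivAt hφ hXY hu
  eq_of_isIntegralCurve_of_lipschitzWith hY hw hφu h₀

end IntegralCurve

/-- Let `E` be a real Banach space, `L` a continuous linear equivalence
of `E`, and `X : ℝ → E → E` a time-dependent vector field which is equivariant under `L`,
continuous in time, and Lipschitz in space with constant `K` independent of `t`.
If `u` and `w` are integral curves of `X` with `w 0 = L (u 0)`, then `w t = L (u t)` for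
all `t` (equivariance of the flow). -/
theorem equivariant_field_equivariant_flow
    {E : Type*} [NormedAddCommGroup E] [NormedSpace ℝ E] [CompleteSpace E]
    (L : E ≃L[ℝ] E) (X : ℝ → E → E) (K : NNReal)
    (hequiv : ∀ t : ℝ, ∀ x : E, X t (L x) = L (X t x))
    (hcont : ∀ y : E, Continuous fun t => X t y)
    (hlip : ∀ t : ℝ, LipschitzWith K (X t))
    (u w : ℝ → E)
    (hu : ∀ t : ℝ, HasDerivAt u (X t (u t)) t)
    (hw : ∀ t : ℝ, HasDerivAt w (X t (w t)) t)
    (h0 : w 0 = L (u 0)) :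
    ∀ t : ℝ, w t = L (u t) := by
  exact congrFun (equivariant_field_equivariant_flow_general
    (fun _ ↦ L.hasFDerivAt) hequiv hlip hu hw h0)
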